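/- Let H be a real-analytic hypersurface in an open set U ⊆ ℂⁿ (n ≥ 2) that is curve-supported from two sides at a point p ∈ H. Then for every compact set K ⊆ H that is a neighborhood of p in H (i.e., H ∩ B_δ(p) ⊆ K for some δ > 0), the rational hull K̂_rat contains an open neighborhood of p in ℂⁿ. -/

import Mathlib

open Metric

noncomputable section

/-- `H` is a (singular) real-analytic hypersurface in the open set `U ⊆ ℂⁿ`:
`H = {z ∈ U : ρ z = 0}` for some real-analytic `ρ : U → ℝ` (analytic over `ℝ`),
`H` nonempty, and `ρ` does not vanish identically on any connected component of `U`. -/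
def IsRealAnalyticHypersurface {n : ℕ} (U H : Set (EuclideanSpace ℂ (Fin n))) : Prop :=
  IsOpen U ∧ H.Nonempty ∧
    ∃ ρ : EuclideanSpace ℂ (Fin n) → ℝ,
      AnalyticOnNhd ℝ ρ U ∧
      H = {z | z ∈ U ∧ ρ z = 0} ∧
      ∀ z ∈ U, ∃ w ∈ connectedComponentIn U z, ρ w ≠ 0

/-- `C = φ '' 𝔻` is a support curve for `H` at `p`, parametrized by the nonconstant
holomorphic map `φ : 𝔻 → U` with `φ 0 = p` and `C ∩ H = {p}`. -/
def IsSupportCurveVia {n : ℕ} (U H : Set (EuclideanSpace ℂ (Fin n)))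
    (p : EuclideanSpace ℂ (Fin n)) (φ : ℂ → EuclideanSpace ℂ (Fin n))
    (C : Set (EuclideanSpace ℂ (Fin n))) : Prop :=
  DifferentiableOn ℂ φ (ball 0 1) ∧
  Set.MapsTo φ (ball 0 1) U ∧
  (∃ a ∈ ball (0 : ℂ) 1, ∃ b ∈ ball (0 : ℂ) 1, φ a ≠ φ b) ∧
  φ 0 = p ∧
  C = φ '' ball 0 1 ∧
  C ∩ H = {p}

/-- `C` is a support curve for `H` at `p`. -/
def IsSupportCurve {n : ℕ} (U H : Set (EuclideanSpace ℂ (Fin n)))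
    (p : EuclideanSpace ℂ (Fin n)) (C : Set (EuclideanSpace ℂ (Fin n))) : Prop :=
  ∃ φ : ℂ → EuclideanSpace ℂ (Fin n), IsSupportCurveVia U H p φ C

/-- `V` is a connected component of `U \ H`. -/
def IsComponentOfComplement {n : ℕ} (U H V : Set (EuclideanSpace ℂ (Fin n))) : Prop :=
  ∃ x ∈ U \ H, V = connectedComponentIn (U \ H) x

/-- `H` is curve-supported from two sides at `p`: there are two support curves at `p`
lying (off `p`) in two distinct connected components of `U \ H`. -/
def CurveSupportedFromTwoSides {n : ℕ} (U H : Set (EuclideanSpace ℂ (Fin n)))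
    (p : EuclideanSpace ℂ (Fin n)) : Prop :=
  ∃ C₁ C₂ V₁ V₂ : Set (EuclideanSpace ℂ (Fin n)),
    IsSupportCurve U H p C₁ ∧ IsSupportCurve U H p C₂ ∧
    IsComponentOfComplement U H V₁ ∧ IsComponentOfComplement U H V₂ ∧
    V₁ ≠ V₂ ∧ C₁ \ {p} ⊆ V₁ ∧ C₂ \ {p} ⊆ V₂

/-- `ψ` is an analytic disc attached to `S`: a nonconstant continuous map on the closed
unit disc, holomorphic on the open unit disc, with boundary values in `S`. -/
def IsAttachedDisc {n : ℕ} (S : Set (EuclideanSpace ℂ (Fin n)))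
    (ψ : ℂ → EuclideanSpace ℂ (Fin n)) : Prop :=
  ContinuousOn ψ (closedBall 0 1) ∧
  DifferentiableOn ℂ ψ (ball 0 1) ∧
  (∃ a ∈ closedBall (0 : ℂ) 1, ∃ b ∈ closedBall (0 : ℂ) 1, ψ a ≠ ψ b) ∧
  ψ '' sphere 0 1 ⊆ S

/-- The polynomial hull of `K ⊆ ℂⁿ`. -/
def polyHull {n : ℕ} (K : Set (EuclideanSpace ℂ (Fin n))) : Set (EuclideanSpace ℂ (Fin n)) :=
  {z | ∀ P : MvPolynomial (Fin n) ℂ,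
    ‖MvPolynomial.eval (fun i => z i) P‖ ≤
      ⨆ w : K, ‖MvPolynomial.eval (fun i => (w : EuclideanSpace ℂ (Fin n)) i) P‖}

/-- The rational hull of `K ⊆ ℂⁿ`. -/
def ratHull {n : ℕ} (K : Set (EuclideanSpace ℂ (Fin n))) : Set (EuclideanSpace ℂ (Fin n)) :=
  {z | ∀ P : MvPolynomial (Fin n) ℂ,
    MvPolynomial.eval (fun i => z i) P ∈
      (fun w : EuclideanSpace ℂ (Fin n) => MvPolynomial.eval (fun i => w i) P) '' K}

/-!
Let `Q` be entire without zeros on `K`. Near `p` the zeros of `Q` avoid `H`, so each lies either in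
the component `V` of `U \ H` carrying a given support curve or in the open set `(U \ H) \ V`. A
small disc on the support curve has boundary in `V`, and it carries no zero outside `V` because its
centre `p` is not a zero. Both facts survive small translations of the disc: a zero outside `V`
could only enter through the boundary. Every point near `p` is the centre of such a translate, so
all zeros of `Q` near `p` lie in `V`. With two support curves they lie in two disjoint components,
so there are none; applying this to `Q = P - P q` shows that `q` belongs to the rational hull. How
close to `p` the point `q` must be depends only on the discs, not on `P`.
-/

open Filter Set Topology

theorem exists_zero_of_norm_lt_on_frontier {E : Type*} [NormedAddCommGroup E] [NormedSpace ℂ E]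
    [Nontrivial E] [FiniteDimensional ℂ E] {U : Set E} (hU : Bornology.IsBounded U)
    {f : E → ℂ} (hf : DiffContOnCl ℂ f U) {z₀ : E} (hz₀ : z₀ ∈ U)
    (hlt : ∀ z ∈ frontier U, ‖f z₀‖ < ‖f z‖) : ∃ z ∈ U, f z = 0 := by
  by_contra! hne
  have hne_closure : ∀ z ∈ closure U, f z ≠ 0 := fun z hz => by
    by_cases hzU : z ∈ U
    · exact hne z hzU
    · exact norm_pos_iff.1 ((norm_nonneg _).trans_lt
        (hlt z ⟨hz, fun hi => hzU (interior_subset hi)⟩))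
  obtain ⟨z, hz, hmax⟩ :=
    Complex.exists_mem_frontier_isMaxOn_norm hU ⟨z₀, hz₀⟩ (hf.inv hne_closure)
  have hle : ‖f z₀‖⁻¹ ≤ ‖f z‖⁻¹ := by simpa using hmax (subset_closure hz₀)
  exact hle.not_gt (inv_strictAnti₀ (norm_pos_iff.2 (hne z₀ hz₀)) (hlt z hz))

/-- Hurwitz's theorem; the predicate `P` localizes the perturbed zero. -/
theorem eventually_exists_zero_of_isolated_zero {X : Type*} [TopologicalSpace X]
    {f : X → ℂ → ℂ} {x₀ : X} {z₀ : ℂ} {P : X × ℂ → Prop}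
    (hcont : ∀ᶠ y in 𝓝 (x₀, z₀), ContinuousAt (fun y : X × ℂ => f y.1 y.2) y)
    (hdiff : ∀ᶠ y in 𝓝 (x₀, z₀), DifferentiableAt ℂ (f y.1) y.2)
    (hzero : f x₀ z₀ = 0) (hisolated : ∀ᶠ z in 𝓝[≠] z₀, f x₀ z ≠ 0)
    (hP : ∀ᶠ y in 𝓝 (x₀, z₀), P y) :
    ∀ᶠ x in 𝓝 x₀, ∃ z, P (x, z) ∧ f x z = 0 := by
  obtain ⟨A, hA, W, hW, hAW⟩ := mem_nhds_prod_iff.1 (hcont.and (hdiff.and hP))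
  obtain ⟨r, hr, hball⟩ :=
    nhds_basis_closedBall.eventually_iff.1
      ((eventually_mem_set.2 hW).and (eventually_nhdsWithin_iff.1 hisolated))
  have hcontAt : ∀ z ∈ closedBall z₀ r,
      ContinuousAt (fun y : X × ℂ => f y.1 y.2) (x₀, z) := fun z hz =>
    (hAW ⟨mem_of_mem_nhds hA, (hball hz).1⟩).1
  have hsphere : ∀ᶠ x in 𝓝 x₀, ∀ z ∈ sphere z₀ r, ‖f x z₀‖ < ‖f x z‖ :=
    (isCompact_sphere z₀ r).eventually_forall_of_forall_eventually fun z hz => by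
      have hcenter : ContinuousAt (fun y : X × ℂ => f y.1 z₀) (x₀, z) :=
        ContinuousAt.comp (f := fun y : X × ℂ => (y.1, z₀))
          (g := fun y : X × ℂ => f y.1 y.2) (x := (x₀, z))
          (hcontAt z₀ (mem_closedBall_self hr.le)) (by fun_prop)
      have hz' : z ∈ closedBall z₀ r := sphere_subset_closedBall hz
      refine hcenter.norm.eventually_lt (hcontAt z hz').norm ?_
      simpa [hzero] using (hball hz').2 (ne_of_mem_sphere hz hr.ne')
  filter_upwards [hA, hsphere] with x hx hlt
  have hxW : ∀ z ∈ closedBall z₀ r, DifferentiableAt ℂ (f x) z ∧ P (x, z) := fun z hz =>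
    (hAW (mk_mem_prod hx (hball hz).1)).2
  have hdisc : DiffContOnCl ℂ (f x) (ball z₀ r) := by
    refine DifferentiableOn.diffContOnCl ?_
    rw [closure_ball z₀ hr.ne']
    exact fun z hz => (hxW z hz).1.differentiableWithinAt
  obtain ⟨z, hz, hfz⟩ := exists_zero_of_norm_lt_on_frontier isBounded_ball hdisc
    (mem_ball_self hr) (by rwa [frontier_ball z₀ hr.ne'])
  exact ⟨z, (hxW z (ball_subset_closedBall hz)).2, hfz⟩

theorem eventually_ne_zero_of_zeros_subset_union {𝕜 F Y : Type*} [NontriviallyNormedField 𝕜]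
    [NormedAddCommGroup F] [NormedSpace 𝕜 F] [TopologicalSpace Y] {S : Set 𝕜}
    (hS : IsPreconnected S) {g : 𝕜 → F} (hg : AnalyticOnNhd 𝕜 g S) {ψ : 𝕜 → Y}
    (hψ : ContinuousOn ψ S) {V O : Set Y} (hV : IsOpen V) (hO : IsOpen O) (hVO : Disjoint V O)
    (hZ : ∀ z ∈ S, g z = 0 → ψ z ∈ V ∪ O) {z₀ z₁ : 𝕜} (hz₁ : z₁ ∈ S) (hψz₁ : ψ z₁ ∈ V)
    (hz₀ : z₀ ∈ S) (hψz₀ : ψ z₀ ∈ O) : ∀ᶠ z in 𝓝[≠] z₀, g z ≠ 0 := by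
  refine (hg z₀ hz₀).eventually_eq_zero_or_eventually_ne_zero.resolve_left fun hg₀ => ?_
  have hzero : EqOn g 0 S := hg.eqOn_zero_of_preconnected_of_eventuallyEq_zero hS hz₀ hg₀
  have hsub : ψ '' S ⊆ V := (hS.image ψ hψ).subset_left_of_subset_union hV hO hVO
    (image_subset_iff.2 fun z hz => hZ z hz (hzero hz)) ⟨_, mem_image_of_mem ψ hz₁, hψz₁⟩
  exact disjoint_left.1 hVO (hsub (mem_image_of_mem ψ hz₀)) hψz₀

section ContinuityPrinciple

theorem isOpen_setOf_forall_zero_mem {X Y Z M : Type*} [TopologicalSpace X] [TopologicalSpace Y]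
    [TopologicalSpace Z] [TopologicalSpace M] [T1Space M] [Zero M] {L : Set Y} (hL : IsCompact L)
    {F : X → Y → Z} {f : X → Y → M}
    (hF : ∀ x, ∀ y ∈ L, ContinuousAt (fun u : X × Y => F u.1 u.2) (x, y))
    (hf : ∀ x, ∀ y ∈ L, ContinuousAt (fun u : X × Y => f u.1 u.2) (x, y))
    {V : Set Z} (hV : IsOpen V) : IsOpen {x | ∀ y ∈ L, f x y = 0 → F x y ∈ V} :=
  isOpen_iff_eventually.2 fun x hx => hL.eventually_forall_of_forall_eventually fun y hy => by
    by_cases hzero : f x y = 0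
    · exact ((hF x y hy).eventually_mem (hV.mem_nhds (hx y hy hzero))).mono fun _ hu _ => hu
    · exact ((hf x y hy).eventually_ne hzero).mono fun _ hu hu₀ => absurd hu₀ hu

variable {E : Type*} [NormedAddCommGroup E] [NormedSpace ℂ E] {V O B : Set E}

/-- The continuity principle. The parameters whose disc has all its zeros of `Q` in `V` form an open
set by compactness of the disc; their complement is open because a zero in `O` persists. -/
theorem zeros_mem_of_disc_family {X : Type*} [TopologicalSpace X] [PreconnectedSpace X]
    {F : X → ℂ → E} {Q : E → ℂ} {c : ℂ} {r : ℝ}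
    (hF : ∀ x, ∀ z ∈ closedBall c r, ContinuousAt (fun y : X × ℂ => F y.1 y.2) (x, z))
    (hFan : ∀ x, AnalyticOnNhd ℂ (F x) (closedBall c r))
    (hFB : ∀ x, MapsTo (F x) (closedBall c r) B) (hFV : ∀ x, MapsTo (F x) (sphere c r) V)
    (hV : IsOpen V) (hO : IsOpen O) (hVO : Disjoint V O) (hQ : AnalyticOnNhd ℂ Q B)
    (hZ : ∀ w ∈ B, Q w = 0 → w ∈ V ∪ O) {x₀ : X}
    (hx₀ : ∀ z ∈ closedBall c r, Q (F x₀ z) = 0 → F x₀ z ∈ V) (x : X) :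
    ∀ z ∈ closedBall c r, Q (F x z) = 0 → F x z ∈ V := by
  set N : Set X := {x | ∀ z ∈ closedBall c r, Q (F x z) = 0 → F x z ∈ V}
  have hQF : ∀ x, ∀ z ∈ closedBall c r,
      ContinuousAt (fun y : X × ℂ => Q (F y.1 y.2)) (x, z) := fun x z hz =>
    ContinuousAt.comp (g := Q) (hQ _ (hFB x hz)).continuousAt (hF x z hz)
  have hQFan : ∀ x, AnalyticOnNhd ℂ (fun z => Q (F x z)) (closedBall c r) := fun x =>
    hQ.comp (hFan x) (hFB x)
  have hN_open : IsOpen N := isOpen_setOf_forall_zero_mem (isCompact_closedBall c r) hF hQF hV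
  have hN_closed : IsClosed N := by
    refine isOpen_compl_iff.1 (isOpen_iff_eventually.2 fun x hx => ?_)
    obtain ⟨z, hz, hzero, hzV⟩ : ∃ z ∈ closedBall c r, Q (F x z) = 0 ∧ F x z ∉ V := by
      simpa [N] using hx
    have hzO : F x z ∈ O := (hZ _ (hFB x hz) hzero).resolve_left hzV
    have hz_ball : z ∈ ball c r :=
      (mem_closedBall.1 hz).lt_of_ne fun hz_sphere => hzV (hFV x hz_sphere)
    obtain ⟨z₁, hz₁⟩ : (sphere c r).Nonempty := NormedSpace.sphere_nonempty.2 (dist_nonneg.trans hz)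
    have hisolated : ∀ᶠ z' in 𝓝[≠] z, Q (F x z') ≠ 0 :=
      eventually_ne_zero_of_zeros_subset_union (convex_closedBall c r).isPreconnected (hQFan x)
        (hFan x).continuousOn hV hO hVO (fun z' hz' => hZ _ (hFB x hz'))
        (sphere_subset_closedBall hz₁) (hFV x hz₁) hz hzO
    have hnear : ∀ᶠ y in 𝓝 (x, z), y.2 ∈ closedBall c r :=
      continuousAt_snd.eventually_mem (closedBall_mem_nhds_of_mem hz_ball)
    filter_upwards [eventually_exists_zero_of_isolated_zero (f := fun x z => Q (F x z))
      (hnear.mono fun y hy => hQF y.1 y.2 hy)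
      (hnear.mono fun y hy => (hQFan y.1 y.2 hy).differentiableAt) hzero hisolated
      (hnear.and ((hF x z hz).eventually_mem (hO.mem_nhds hzO)))]
      with x' ⟨z', ⟨hz', hO'⟩, hzero'⟩ hx'
    exact disjoint_left.1 hVO (hx' z' hz' hzero') hO'
  exact eq_univ_iff_forall.1 (IsClopen.eq_univ ⟨hN_closed, hN_open⟩ ⟨x₀, hx₀⟩) x

theorem eventually_zero_mem_of_punctured_disc {φ : ℂ → E} {r : ℝ} (hr : 0 < r)
    (hφ : AnalyticOnNhd ℂ φ (closedBall 0 r)) (hφB : MapsTo φ (closedBall 0 r) B)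
    (hφV : MapsTo φ (closedBall 0 r \ {0}) V) (hV : IsOpen V) (hO : IsOpen O) (hB : IsOpen B)
    (hVO : Disjoint V O) :
    ∀ᶠ q in 𝓝 (φ 0), ∀ Q : E → ℂ, AnalyticOnNhd ℂ Q B → Q (φ 0) ≠ 0 →
      (∀ w ∈ B, Q w = 0 → w ∈ V ∪ O) → Q q = 0 → q ∈ V := by
  have htranslate {X : Type _} [TopologicalSpace X] {v : X → E} (hv : Continuous v) (x : X)
      {z : ℂ} (hz : z ∈ closedBall (0 : ℂ) r) :
      ContinuousAt (fun y : X × ℂ => φ y.2 + (v y.1 - φ 0)) (x, z) :=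
    ((hφ z hz).continuousAt.comp (f := Prod.snd) (x := (x, z)) continuousAt_snd).add (by fun_prop)
  have htranslate_mem {S : Set ℂ} (hS : IsCompact S) (hSr : S ⊆ closedBall 0 r) {W : Set E}
      (hW : IsOpen W) (hφW : MapsTo φ S W) :
      ∀ᶠ q in 𝓝 (φ 0), ∀ z ∈ S, φ z + (q - φ 0) ∈ W :=
    hS.eventually_forall_of_forall_eventually fun z hz =>
      (htranslate continuous_id (φ 0) (hSr hz)).eventually_mem
        (hW.mem_nhds (by simpa using hφW hz))
  have hsphere : sphere (0 : ℂ) r ⊆ closedBall 0 r \ {0} := fun z hz =>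
    ⟨sphere_subset_closedBall hz, ne_of_mem_sphere hz hr.ne'⟩
  obtain ⟨ε, hε, hball⟩ := eventually_nhds_iff_ball.1
    ((htranslate_mem (isCompact_closedBall 0 r) Subset.rfl hB hφB).and
      (htranslate_mem (isCompact_sphere 0 r) sphere_subset_closedBall hV
        (hφV.mono_left hsphere)))
  filter_upwards [ball_mem_nhds (φ 0) hε] with q hq Q hQ hQ₀ hZ hQq
  have : PreconnectedSpace (ball (φ 0) ε) :=
    Subtype.preconnectedSpace (convex_ball (φ 0) ε).isPreconnected
  have hbase : ∀ z ∈ closedBall (0 : ℂ) r, Q (φ z + (φ 0 - φ 0)) = 0 →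
      φ z + (φ 0 - φ 0) ∈ V := fun z hz hzero => by
    rw [sub_self, add_zero] at hzero ⊢
    exact hφV ⟨hz, by rintro rfl; exact hQ₀ hzero⟩
  have hqV := zeros_mem_of_disc_family (X := ball (φ 0) ε) (F := fun q z => φ z + (q - φ 0))
    (fun q _ hz => htranslate continuous_subtype_val q hz)
    (fun q => hφ.add analyticOnNhd_const)
    (fun q => (hball q q.2).1) (fun q => (hball q q.2).2) hV hO hVO hQ hZ
    (x₀ := ⟨φ 0, mem_ball_self hε⟩) hbase ⟨q, hq⟩ 0 (mem_closedBall_self hr.le)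
  simpa [hQq] using hqV

end ContinuityPrinciple

section Components

variable {α : Type*} [TopologicalSpace α] {F : Set α}

theorem disjoint_connectedComponentIn_of_ne {x y : α}
    (h : connectedComponentIn F x ≠ connectedComponentIn F y) :
    Disjoint (connectedComponentIn F x) (connectedComponentIn F y) :=
  disjoint_left.2 fun _ hx hy =>
    h ((connectedComponentIn_eq hx).trans (connectedComponentIn_eq hy).symm)

theorem isOpen_diff_connectedComponentIn [LocallyConnectedSpace α] (hF : IsOpen F) (x : α) :
    IsOpen (F \ connectedComponentIn F x) := by
  refine isOpen_iff_mem_nhds.2 fun y hy => ?_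
  have hne : connectedComponentIn F y ≠ connectedComponentIn F x := fun h =>
    hy.2 (h ▸ mem_connectedComponentIn hy.1)
  filter_upwards [hF.connectedComponentIn.mem_nhds (mem_connectedComponentIn hy.1)] with z hz
  exact ⟨connectedComponentIn_subset F y hz,
    disjoint_left.1 (disjoint_connectedComponentIn_of_ne hne) hz⟩

end Components

section SupportCurves

variable {n : ℕ} {U H C V K : Set (EuclideanSpace ℂ (Fin n))} {p : EuclideanSpace ℂ (Fin n)}

theorem IsRealAnalyticHypersurface.subset (hH : IsRealAnalyticHypersurface U H) : H ⊆ U := by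
  obtain ⟨-, -, ρ, -, rfl, -⟩ := hH
  exact fun _ hz => hz.1

theorem IsRealAnalyticHypersurface.isOpen_diff (hH : IsRealAnalyticHypersurface U H) :
    IsOpen (U \ H) := by
  obtain ⟨hU, -, ρ, hρ, rfl, -⟩ := hH
  have heq : U \ {z | z ∈ U ∧ ρ z = 0} = U ∩ ρ ⁻¹' {0}ᶜ := by
    ext z
    exact and_congr_right fun hz => not_congr (and_iff_right hz)
  rw [heq]
  exact hρ.continuousOn.isOpen_inter_preimage hU isOpen_compl_singleton

theorem IsComponentOfComplement.disjoint {V' : Set (EuclideanSpace ℂ (Fin n))}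
    (hV : IsComponentOfComplement U H V) (hV' : IsComponentOfComplement U H V')
    (hne : V ≠ V') : Disjoint V V' := by
  obtain ⟨x, -, rfl⟩ := hV
  obtain ⟨y, -, rfl⟩ := hV'
  exact disjoint_connectedComponentIn_of_ne hne

theorem IsSupportCurveVia.eventually_ne {φ : ℂ → EuclideanSpace ℂ (Fin n)}
    (hφ : IsSupportCurveVia U H p φ C) : ∀ᶠ z in 𝓝[≠] 0, φ z ≠ p := by
  obtain ⟨hdiff, -, ⟨a, ha, b, hb, hab⟩, -⟩ := hφ
  have han : AnalyticOnNhd ℂ φ (ball 0 1) := hdiff.analyticOnNhd isOpen_ball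
  have h0 : (0 : ℂ) ∈ ball (0 : ℂ) 1 := mem_ball_self one_pos
  refine ((han 0 h0).eventually_eq_or_eventually_ne analyticAt_const).resolve_left fun hconst => ?_
  have heq : EqOn φ (fun _ => p) (ball 0 1) := han.eqOn_of_preconnected_of_eventuallyEq
    analyticOnNhd_const (convex_ball 0 1).isPreconnected h0 hconst
  exact hab ((heq ha).trans (heq hb).symm)

theorem IsSupportCurveVia.exists_closedBall_mapsTo {φ : ℂ → EuclideanSpace ℂ (Fin n)}
    (hφ : IsSupportCurveVia U H p φ C) {B : Set (EuclideanSpace ℂ (Fin n))} (hB : B ∈ 𝓝 p) :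
    ∃ r > 0, AnalyticOnNhd ℂ φ (closedBall 0 r) ∧ MapsTo φ (closedBall 0 r) B ∧
      MapsTo φ (closedBall 0 r \ {0}) (C \ {p}) := by
  have hne := eventually_nhdsWithin_iff.1 hφ.eventually_ne
  obtain ⟨hdiff, -, -, rfl, rfl, -⟩ := hφ
  have han : AnalyticOnNhd ℂ φ (ball 0 1) := hdiff.analyticOnNhd isOpen_ball
  obtain ⟨r, hr, hball⟩ := nhds_basis_closedBall.eventually_iff.1
    ((hne.and (ball_mem_nhds (0 : ℂ) one_pos)).and
      ((han 0 (mem_ball_self one_pos)).continuousAt.eventually_mem hB))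
  exact ⟨r, hr, fun z hz => han z (hball hz).1.2, fun z hz => (hball hz).2,
    fun z hz => ⟨mem_image_of_mem φ (hball hz.1).1.2, (hball hz.1).1.1 hz.2⟩⟩

theorem IsSupportCurve.eventually_zero_mem (hC : IsSupportCurve U H p C) (hU : U ∈ 𝓝 p)
    (hUH : IsOpen (U \ H)) (hV : IsComponentOfComplement U H V) (hCV : C \ {p} ⊆ V)
    (hK : K ∈ 𝓝[H] p) :
    ∀ᶠ q in 𝓝 p, ∀ Q : EuclideanSpace ℂ (Fin n) → ℂ, AnalyticOnNhd ℂ Q univ →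
      (∀ w ∈ K, Q w ≠ 0) → Q q = 0 → q ∈ V := by
  obtain ⟨φ, hφ⟩ := hC
  obtain ⟨x, -, rfl⟩ := hV
  obtain ⟨W, hW, hpW, hWK⟩ := mem_nhdsWithin.1 hK
  have ⟨_, _, _, hφ₀, _, hCH⟩ := hφ
  have hpH : p ∈ H := (hCH.ge (mem_singleton p)).2
  have hB : IsOpen (W ∩ interior U) := hW.inter isOpen_interior
  obtain ⟨r, hr, hφan, hφB, hφC⟩ := hφ.exists_closedBall_mapsTo
    (hB.mem_nhds ⟨hpW, mem_interior_iff_mem_nhds.2 hU⟩)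
  have hnear := eventually_zero_mem_of_punctured_disc hr hφan hφB (hφC.mono_right hCV)
    hUH.connectedComponentIn (isOpen_diff_connectedComponentIn hUH x) hB disjoint_sdiff_right
  rw [hφ₀] at hnear
  filter_upwards [hnear] with q hq Q hQ hQK hQq
  refine hq Q (hQ.mono (subset_univ _)) (hQK p (hWK ⟨hpW, hpH⟩)) (fun w hw hQw => ?_) hQq
  have hwH : w ∉ H := fun hwH => hQK w (hWK ⟨hw.1, hwH⟩) hQw
  rw [union_sdiff_cancel (connectedComponentIn_subset _ _)]
  exact ⟨interior_subset hw.2, hwH⟩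

theorem rational_hull_contains_neighborhood_general (hU : U ∈ 𝓝 p) (hUH : IsOpen (U \ H))
    (h2 : CurveSupportedFromTwoSides U H p) (hK : K ∈ 𝓝[H] p) : ratHull K ∈ 𝓝 p := by
  obtain ⟨C₁, C₂, V₁, V₂, hC₁, hC₂, hV₁, hV₂, hne, hCV₁, hCV₂⟩ := h2
  filter_upwards [hC₁.eventually_zero_mem hU hUH hV₁ hCV₁ hK,
    hC₂.eventually_zero_mem hU hUH hV₂ hCV₂ hK] with q hq₁ hq₂ P
  by_contra hP
  set Q : EuclideanSpace ℂ (Fin n) → ℂ := fun z =>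
    MvPolynomial.eval (fun i => z i) P - MvPolynomial.eval (fun i => q i) P
  have hQ : AnalyticOnNhd ℂ Q univ :=
    (AnalyticOnNhd.eval_continuousLinearMap
      (EuclideanSpace.equiv (Fin n) ℂ).toContinuousLinearMap P).sub analyticOnNhd_const
  have hQK : ∀ w ∈ K, Q w ≠ 0 := fun w hw hQw => hP ⟨w, hw, sub_eq_zero.1 hQw⟩
  exact disjoint_left.1 (hV₁.disjoint hV₂ hne) (hq₁ Q hQ hQK (sub_self _))
    (hq₂ Q hQ hQK (sub_self _))

end SupportCurves

theorem rational_hull_contains_neighborhood {n : ℕ} (hn : 2 ≤ n)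
    (U H : Set (EuclideanSpace ℂ (Fin n)))
    (hH : IsRealAnalyticHypersurface U H)
    (p : EuclideanSpace ℂ (Fin n)) (hp : p ∈ H)
    (h2 : CurveSupportedFromTwoSides U H p) :
    ∀ K : Set (EuclideanSpace ℂ (Fin n)), IsCompact K → K ⊆ H →
      (∃ δ > 0, H ∩ ball p δ ⊆ K) →
      ∃ ε > 0, ball p ε ⊆ ratHull K := by
  rintro K - - ⟨δ, hδ, hK⟩
  exact Metric.mem_nhds_iff.1 (rational_hull_contains_neighborhood_general
    (hH.1.mem_nhds (hH.subset hp)) hH.isOpen_diff h2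
    (Metric.mem_nhdsWithin_iff.2 ⟨δ, hδ, by rwa [inter_comm]⟩))
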